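/- arXiv:1501.00932 — 2 statements merged into one kernel-verified Lean document; each statement's English description precedes it below -/
import Mathlib

section
/- Let A be a 2×2 matrix with integer entries whose determinant is 1 or −1. Suppose there exist λ ∈ ℝ and a nonzero vector v ∈ ℝ² with A·v = λ·v (viewing A as a real matrix), such that v is not a real scalar multiple of any nonzero vector with integer coordinates. Then either A is the identity matrix, or A is minus the identity matrix, or A is hyperbolic, i.e. A has a real eigenvalue μ with |μ| > 1. -/
open Matrix

/-- An integer 2×2 matrix of determinant ±1 having a real eigenvector of irrational slope
is either ±Id or hyperbolic (it has a real eigenvalue of absolute value greater than one). -/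
theorem irrational_eigendirection_implies_hyperbolic_or_pm_id
    (A : Matrix (Fin 2) (Fin 2) ℤ) (hdet : A.det = 1 ∨ A.det = -1)
    (lam : ℝ) (v : Fin 2 → ℝ) (hv : v ≠ 0)
    (heig : (A.map (Int.cast : ℤ → ℝ)) *ᵥ v = lam • v)
    (hirr : ∀ (c : ℝ) (w : Fin 2 → ℤ), w ≠ 0 → v ≠ c • fun i => (w i : ℝ)) :
    A = 1 ∨ A = -1 ∨
      ∃ μ : ℝ, 1 < |μ| ∧ ∃ w : Fin 2 → ℝ, w ≠ 0 ∧ (A.map (Int.cast : ℤ → ℝ)) *ᵥ w = μ • w := by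
  have key : ∀ p q : ℤ, (p : ℝ) * v 0 + q * v 1 = 0 → p = 0 ∧ q = 0 := by
    intro p q h
    by_contra hne
    by_cases hq : q = 0
    · have hp : p ≠ 0 := fun hp => hne ⟨hp, hq⟩
      have hpR : (p : ℝ) ≠ 0 := by exact_mod_cast hp
      refine hirr (-(v 1) / p) ![q, -p] ?_ ?_
      · intro h0
        have := congrFun h0 1
        simp at this
        exact hp this
      · subst hq
        have hx : v 0 = 0 := by simpa [hp] using h
        funext i
        fin_cases i
        · simp [hx]
        · simp
          field_simp
    · have hqR : (q : ℝ) ≠ 0 := by exact_mod_cast hq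
      refine hirr (v 0 / q) ![q, -p] ?_ ?_
      · intro h0
        have := congrFun h0 0
        simp at this
        exact hq this
      · funext i
        fin_cases i
        · simp
          field_simp
        · simp
          field_simp
          linarith
  have h0 := congrFun heig 0
  have h1 := congrFun heig 1
  simp [Matrix.mulVec, dotProduct, Fin.sum_univ_two] at h0 h1
  rw [Matrix.det_fin_two] at hdet
  have hx : v 0 ≠ 0 := by
    intro h
    have := key 1 0 (by simp [h])
    simp at this
  have hunit : ∀ e : ℤ, lam = e → A 0 0 = e ∧ A 0 1 = 0 ∧ A 1 0 = 0 ∧ A 1 1 = e := by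
    intro e he
    subst he
    have k0 := key (A 0 0 - e) (A 0 1) (by push_cast; linarith)
    have k1 := key (A 1 0) (A 1 1 - e) (by push_cast; linarith)
    omega
  have hchar : ((A 0 0 : ℝ) - lam) * (A 1 1 - lam) - A 0 1 * A 1 0 = 0 := by
    apply (mul_eq_zero.mp _).resolve_right hx
    linear_combination (A 1 1 - lam) * h0 - (A 0 1 : ℝ) * h1
  rcases lt_trichotomy |lam| 1 with hl | hl | hl
  · right; right
    have hprod : |lam| * |(A 0 0 : ℝ) + A 1 1 - lam| = 1 := by
      rw [← abs_mul]
      have e : lam * ((A 0 0 : ℝ) + A 1 1 - lam) = ((A 0 0 * A 1 1 - A 0 1 * A 1 0 : ℤ) : ℝ) := by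
        push_cast; linear_combination -hchar
      rw [e]
      rcases hdet with h | h <;> rw [h] <;> simp
    have hb : A 0 1 ≠ 0 := by
      intro hb
      have hla : lam = A 0 0 := by
        rw [hb] at h0
        simp at h0
        rcases h0 with h | h
        · exact h.symm
        · exact absurd h hx
      have h00 : A 0 0 = 0 := by
        rw [hla] at hl
        have : |A 0 0| < 1 := by exact_mod_cast hl
        exact Int.abs_lt_one_iff.mp this
      rw [hb, h00] at hdet
      simp at hdet
    refine ⟨(A 0 0 : ℝ) + A 1 1 - lam, ?_, ![(A 0 1 : ℝ), A 1 1 - lam], ?_, ?_⟩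
    · nlinarith [abs_nonneg lam, abs_nonneg ((A 0 0 : ℝ) + A 1 1 - lam)]
    · intro h
      have := congrFun h 0
      simp at this
      exact hb this
    · funext i
      fin_cases i
      · simp [Matrix.mulVec, dotProduct, Fin.sum_univ_two]
        ring
      · simp [Matrix.mulVec, dotProduct, Fin.sum_univ_two]
        linear_combination -hchar
  · rcases eq_or_eq_neg_of_abs_eq hl with h | h
    · left
      obtain ⟨a, b, c, d⟩ := hunit 1 (by simp [h])
      ext i j
      fin_cases i <;> fin_cases j <;> simp [a, b, c, d]
    · right; left
      obtain ⟨a, b, c, d⟩ := hunit (-1) (by simp [h])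
      ext i j
      fin_cases i <;> fin_cases j <;> simp [a, b, c, d]
  · exact Or.inr (Or.inr ⟨lam, hl, v, hv, heig⟩)
end

section
/- Work in ℝᵈ with Lebesgue measure m. Let U, V ⊆ ℝᵈ be open sets, h : U → V a homeomorphism, x ∈ U, y = h(x), and C ≥ 1, r₀ > 0 constants such that: (i) for every measurable E ⊆ U, (1/C)·m(E) ≤ m(h(E)) ≤ C·m(E); (ii) for every 0 < r < r₀, the closed ball B(x,r) is contained in U and B(y,r/C) ⊆ h(B(x,r)) ⊆ B(y,C·r) ⊆ V. Let A ⊆ ℝᵈ be measurable with m(h(A ∩ U) Δ (A ∩ V)) = 0. If x is a Lebesgue density point of A, i.e. m(A ∩ B(x,r))/m(B(x,r)) → 1 as r → 0⁺, then y is also a Lebesgue density point of A. -/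
open MeasureTheory Metric Filter Set

open Measure in
lemma aux_compl {d : ℕ} (A : Set (EuclideanSpace ℝ (Fin d))) (hA : MeasurableSet A)
    (x : EuclideanSpace ℝ (Fin d)) (r : ℝ) (hr : 0 < r) :
    volume (A ∩ closedBall x r) / volume (closedBall x r)
      + volume (closedBall x r \ A) / volume (closedBall x r) = 1 := by
  have h0 : volume (closedBall x r) ≠ 0 := (measure_closedBall_pos volume x hr).ne'
  have h1 : volume (closedBall x r) ≠ ⊤ := measure_closedBall_lt_top.ne
  rw [← ENNReal.add_div, Set.inter_comm, measure_inter_add_diff _ hA, ENNReal.div_self h0 h1]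

/-- A homeomorphism between open sets of ℝᵈ distorting measure and balls by a bounded factor
and carrying a set `A` to itself (mod zero) maps Lebesgue density points of `A` to Lebesgue
density points of `A`. -/
theorem holonomy_preserves_density_points {d : ℕ}
    (U V : Set (EuclideanSpace ℝ (Fin d))) (hU : IsOpen U) (hV : IsOpen V)
    (h g : EuclideanSpace ℝ (Fin d) → EuclideanSpace ℝ (Fin d))
    (hcont : ContinuousOn h U) (hbij : Set.BijOn h U V)
    (hgcont : ContinuousOn g V) (hginv : Set.InvOn g h U V)
    (x y : EuclideanSpace ℝ (Fin d)) (hxU : x ∈ U) (hy : y = h x)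
    (C r₀ : ℝ) (hC : 1 ≤ C) (hr₀ : 0 < r₀)
    (hmeas : ∀ E ⊆ U, MeasurableSet E →
      ENNReal.ofReal (1 / C) * volume E ≤ volume (h '' E) ∧
      volume (h '' E) ≤ ENNReal.ofReal C * volume E)
    (hballs : ∀ r : ℝ, 0 < r → r < r₀ →
      closedBall x r ⊆ U ∧
      closedBall y (r / C) ⊆ h '' closedBall x r ∧
      h '' closedBall x r ⊆ closedBall y (C * r) ∧
      closedBall y (C * r) ⊆ V)
    (A : Set (EuclideanSpace ℝ (Fin d))) (hA : MeasurableSet A)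
    (hAinv : volume (symmDiff (h '' (A ∩ U)) (A ∩ V)) = 0)
    (hx : Tendsto (fun r : ℝ => volume (A ∩ closedBall x r) / volume (closedBall x r))
      (nhdsWithin 0 (Set.Ioi 0)) (nhds 1)) :
    Tendsto (fun r : ℝ => volume (A ∩ closedBall y r) / volume (closedBall y r))
      (nhdsWithin 0 (Set.Ioi 0)) (nhds 1) := by
  have hC0 : 0 < C := by linarith
  -- complement ratio at x tends to zero
  have hcx : Tendsto (fun r : ℝ => volume (closedBall x r \ A) / volume (closedBall x r))
      (nhdsWithin 0 (Set.Ioi 0)) (nhds 0) := by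
    have h1 := ENNReal.Tendsto.sub (tendsto_const_nhds (x := (1 : ENNReal))) hx
      (Or.inl ENNReal.one_ne_top)
    rw [tsub_self] at h1
    refine h1.congr' ?_
    filter_upwards [self_mem_nhdsWithin] with r hr
    have h2 := aux_compl A hA x r hr
    have hne : volume (A ∩ closedBall x r) / volume (closedBall x r) ≠ ⊤ :=
      ne_top_of_le_ne_top ENNReal.one_ne_top (h2 ▸ le_self_add)
    exact ENNReal.sub_eq_of_eq_add hne (by rw [add_comm]; exact h2.symm)
  have hscale : Tendsto (fun s : ℝ => C * s) (nhdsWithin 0 (Set.Ioi 0))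
      (nhdsWithin 0 (Set.Ioi 0)) := by
    refine tendsto_nhdsWithin_iff.2 ⟨?_, ?_⟩
    · have : Tendsto (fun s : ℝ => C * s) (nhds 0) (nhds (C * 0)) :=
        (continuous_const.mul continuous_id).tendsto 0
      rw [mul_zero] at this
      exact this.mono_left nhdsWithin_le_nhds
    · filter_upwards [self_mem_nhdsWithin] with s hs
      exact mul_pos hC0 hs
  have hcx2 := hcx.comp hscale
  set K : ENNReal := ENNReal.ofReal C * ENNReal.ofReal (C ^ d) with hK
  have hKtop : K ≠ ⊤ := ENNReal.mul_ne_top ENNReal.ofReal_ne_top ENNReal.ofReal_ne_top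
  have hcx3 := ENNReal.Tendsto.const_mul hcx2 (Or.inr hKtop)
  rw [mul_zero] at hcx3
  have hcy : Tendsto (fun r : ℝ => volume (closedBall y r \ A) / volume (closedBall y r))
      (nhdsWithin 0 (Set.Ioi 0)) (nhds 0) := by
    refine tendsto_of_tendsto_of_tendsto_of_le_of_le' tendsto_const_nhds hcx3
      (Eventually.of_forall fun _ => zero_le) ?_
    have hsm : ∀ᶠ s : ℝ in nhdsWithin 0 (Set.Ioi 0), s < r₀ / C :=
      nhdsWithin_le_nhds (Iio_mem_nhds (div_pos hr₀ hC0))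
    filter_upwards [self_mem_nhdsWithin, hsm] with s hs hs2
    have hs0 : 0 < s := hs
    have hCs : C * s < r₀ := by
      rw [lt_div_iff₀ hC0] at hs2; linarith
    obtain ⟨b1, b2, -, b4⟩ := hballs (C * s) (mul_pos hC0 hs0) hCs
    rw [mul_div_cancel_left₀ _ hC0.ne'] at b2
    have hsub : closedBall y s \ A ⊆
        h '' (closedBall x (C * s) \ A) ∪ symmDiff (h '' (A ∩ U)) (A ∩ V) := by
      rintro z ⟨hz, hzA⟩
      obtain ⟨w, hw, rfl⟩ := b2 hz
      by_cases hwA : w ∈ A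
      · right
        exact Or.inl ⟨⟨w, ⟨hwA, b1 hw⟩, rfl⟩, fun hh => hzA hh.1⟩
      · left
        exact ⟨w, ⟨hw, hwA⟩, rfl⟩
    have hle : volume (closedBall y s \ A) ≤
        ENNReal.ofReal C * volume (closedBall x (C * s) \ A) := by
      calc volume (closedBall y s \ A) ≤ _ := measure_mono hsub
        _ ≤ _ := measure_union_le _ _
        _ = volume (h '' (closedBall x (C * s) \ A)) := by rw [hAinv, add_zero]
        _ ≤ _ := (hmeas _ (diff_subset.trans b1) (measurableSet_closedBall.diff hA)).2
    have hvol : volume (closedBall x (C * s)) =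
        ENNReal.ofReal (C ^ d) * volume (closedBall y s) := by
      rw [Measure.addHaar_closedBall_mul volume x hC0.le hs0.le,
        Measure.addHaar_closedBall_center volume y s, finrank_euclideanSpace_fin]
    have hD0 : ENNReal.ofReal (C ^ d) ≠ 0 := (ENNReal.ofReal_pos.2 (pow_pos hC0 d)).ne'
    have hDt : ENNReal.ofReal (C ^ d) ≠ ⊤ := ENNReal.ofReal_ne_top
    simp only [Function.comp]
    rw [hvol, hK]
    calc volume (closedBall y s \ A) / volume (closedBall y s)
        ≤ ENNReal.ofReal C * volume (closedBall x (C * s) \ A) / volume (closedBall y s) := by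
          gcongr
      _ = _ := by
          rw [mul_assoc, mul_div_assoc, ← mul_div_assoc (ENNReal.ofReal (C ^ d)),
            ENNReal.mul_div_mul_left _ _ hD0 hDt]
  have h1 := ENNReal.Tendsto.sub (tendsto_const_nhds (x := (1 : ENNReal))) hcy
    (Or.inl ENNReal.one_ne_top)
  rw [tsub_zero] at h1
  refine h1.congr' ?_
  filter_upwards [self_mem_nhdsWithin] with r hr
  have h2 := aux_compl A hA y r hr
  have hne : volume (closedBall y r \ A) / volume (closedBall y r) ≠ ⊤ :=
    ne_top_of_le_ne_top ENNReal.one_ne_top (h2 ▸ le_add_self)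
  exact ENNReal.sub_eq_of_eq_add hne h2.symm
end
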